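/- Brascamp–Lieb exponential moment inequality: There exists a constant C > 0 depending only on a_V and A_V such that for every finite connected graph G = (V ∪ ∂V, E) with distinguished nonempty set ∂V, every boundary condition ψ : ∂V → ℝ, and every ν ∈ ℝ^V, E_{P^ψ}[exp(⟨ν, h⟩ − E_{P^ψ}⟨ν, h⟩)] ≤ E[exp(C ⟨ν, h*⟩)], where ⟨ν, h⟩ = Σ_{x∈V} ν(x) h(x), h is distributed according to the GL measure P^ψ, and h* is distributed according to the zero-boundary discrete Gaussian free field on G with unit weights. -/

import Mathlib

/-!
The proof rests on the Prékopa–Leindler inequality at midpoints, `midpointPL_pi`: if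
`f x * g y ≤ k ((x + y) / 2) ^ 2` for all `x, y ∈ ℝⁿ`, then `∫ f * ∫ g ≤ (∫ k) ^ 2`. On the line it
follows from `|A + B| ≥ |A| + |B|` and the layer-cake formula, and it tensorizes.

Let `D` be the Dirichlet form with zero boundary values. Connectedness and `∂V ≠ ∅` make `D`
positive definite, so `⟨ν, ·⟩ = D(u, ·)` for some `u`. Since the second derivative of `V` is at
least `a`, the Hamiltonian satisfies
`H((x + y) / 2) + (a / 8) D(x - y, x - y) ≤ (H x + H y) / 2`, so Prékopa–Leindler applies to
`exp (⟨ν, ·⟩ - H)`, `exp (-⟨ν, ·⟩ - H)` and `exp (D(u, u) / (2a) - H)`, which gives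
`E exp ⟨ν, h⟩ * E exp (-⟨ν, h⟩) ≤ exp (D(u, u) / a)`. In particular both moments are finite, and by
Jensen's inequality the left side dominates `E exp (⟨ν, h⟩ - E ⟨ν, h⟩)`.

Translating the free field by `C • u` gives `E exp (C ⟨ν, h*⟩) = exp (C² D(u, u) / 2)`, so
`C = √(2 / a)` works.
-/

open MeasureTheory ProbabilityTheory Real
open scoped ENNReal NNReal Classical

noncomputable section

/-- `h ∨ ψ`: the field `h` on the interior `V = (∂V)ᶜ` extended by `ψ` on the boundary `∂V = B`. -/
def gvee {α : Type*} [DecidableEq α] (B : Finset α) (h : {x // x ∉ B} → ℝ) (ψ : α → ℝ) :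
    α → ℝ :=
  fun x => if hx : x ∉ B then h ⟨x, hx⟩ else ψ x

/-- GL Hamiltonian `∑_{b ∈ E} V(∇(h∨ψ)(b))` on a graph (each undirected edge counted once,
which for even `V` agrees with half the sum over ordered adjacent pairs). -/
def graphGLEnergy {α : Type*} [Fintype α] [DecidableEq α] (V : ℝ → ℝ)
    (G : SimpleGraph α) [DecidableRel G.Adj] (B : Finset α) (ψ : α → ℝ)
    (h : {x // x ∉ B} → ℝ) : ℝ :=
  (1 / 2) * ∑ x : α, ∑ y : α, if G.Adj x y then V (gvee B h ψ y - gvee B h ψ x) else 0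

/-- `P` is the GL measure on the graph `G` with boundary set `B`, potential `V` and boundary
condition `ψ`: a probability measure proportional to `exp(−H) dh` on `ℝ^V`. -/
def IsGraphGL {α : Type*} [Fintype α] [DecidableEq α] (V : ℝ → ℝ)
    (G : SimpleGraph α) [DecidableRel G.Adj] (B : Finset α) (ψ : α → ℝ)
    (P : Measure ({x // x ∉ B} → ℝ)) : Prop :=
  IsProbabilityMeasure P ∧ ∃ c : ℝ≥0∞, c ≠ 0 ∧ c ≠ ⊤ ∧
    P = c • (volume.withDensity fun h => ENNReal.ofReal (Real.exp (-(graphGLEnergy V G B ψ h))))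

/-- DGFF Hamiltonian `(1/2) ∑_{b ∈ E} ω(b) (∇(h∨φ)(b))²` on a weighted graph. -/
def graphDGFFEnergy {α : Type*} [Fintype α] [DecidableEq α]
    (G : SimpleGraph α) [DecidableRel G.Adj] (B : Finset α) (w : α → α → ℝ) (φ : α → ℝ)
    (h : {x // x ∉ B} → ℝ) : ℝ :=
  (1 / 4) * ∑ x : α, ∑ y : α,
    if G.Adj x y then w x y * (gvee B h φ y - gvee B h φ x) ^ 2 else 0

/-- `P` is the discrete Gaussian free field on the weighted graph `(G, w)` with boundary set `B`
and boundary condition `φ`. -/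
def IsGraphDGFF {α : Type*} [Fintype α] [DecidableEq α]
    (G : SimpleGraph α) [DecidableRel G.Adj] (B : Finset α) (w : α → α → ℝ) (φ : α → ℝ)
    (P : Measure ({x // x ∉ B} → ℝ)) : Prop :=
  IsProbabilityMeasure P ∧ ∃ c : ℝ≥0∞, c ≠ 0 ∧ c ≠ ⊤ ∧
    P = c • (volume.withDensity fun h =>
      ENNReal.ofReal (Real.exp (-(graphDGFFEnergy G B w φ h))))

/-! ### The one-dimensional Prékopa–Leindler inequality -/

/-- Brunn–Minkowski for compact sets on the line: the translates `K + min L` and `max K + L`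
lie in `K + L` and meet in at most one point. -/
theorem volume_add_le_of_isCompact {K L T : Set ℝ} (hK : IsCompact K) (hL : IsCompact L)
    (hKne : K.Nonempty) (hLne : L.Nonempty) (hT : ∀ a ∈ K, ∀ b ∈ L, a + b ∈ T) :
    volume K + volume L ≤ volume T := by
  obtain ⟨p, hpK, hp⟩ := hK.exists_isGreatest hKne
  obtain ⟨q, hqL, hq⟩ := hL.exists_isLeast hLne
  have h1 : volume ((fun x => x + (-q)) ⁻¹' K) = volume K := measure_preimage_add_right _ _ _
  have h2 : volume ((fun x => (-p) + x) ⁻¹' L) = volume L := measure_preimage_add _ _ _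
  have hm : MeasurableSet ((fun x => (-p) + x) ⁻¹' L) :=
    hL.measurableSet.preimage (by fun_prop)
  rw [← h1, ← h2, ← measure_union₀ hm.nullMeasurableSet]
  · refine measure_mono ?_
    rintro x (hx | hx)
    · have := hT _ hx q hqL
      simpa using this
    · have := hT p hpK _ hx
      simpa using this
  · refine measure_mono_null (t := {p + q}) ?_ (by simp)
    rintro x ⟨hx1, hx2⟩
    have ha := hp hx1
    have hb := hq hx2
    simp only [Set.mem_singleton_iff]
    linarith

theorem volume_add_le {A B T : Set ℝ} (hA : MeasurableSet A) (hB : MeasurableSet B)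
    (hAne : A.Nonempty) (hBne : B.Nonempty) (hT : ∀ a ∈ A, ∀ b ∈ B, a + b ∈ T) :
    volume A + volume B ≤ volume T := by
  obtain ⟨a, ha⟩ := hAne
  obtain ⟨b, hb⟩ := hBne
  rw [hA.measure_eq_iSup_isCompact, hB.measure_eq_iSup_isCompact]
  simp only [iSup_and']
  refine ENNReal.biSup_add_biSup_le' (p := fun K => K ⊆ A ∧ IsCompact K)
    (q := fun K => K ⊆ B ∧ IsCompact K) ⟨∅, by simp⟩ ⟨∅, by simp⟩ ?_
  rintro K ⟨hKA, hK⟩ L ⟨hLB, hL⟩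
  have := volume_add_le_of_isCompact (hK.insert a) (hL.insert b) (by simp) (by simp)
    (T := T) ?_
  · refine le_trans ?_ this
    gcongr <;> simp
  · intro x hx y hy
    exact hT x (Set.insert_subset ha hKA hx) y (Set.insert_subset hb hLB hy)

/-- The additive form of the inequality for functions with supremum `1`: all superlevel sets at
heights `t < 1` are nonempty, so the layer-cake formula reduces it to `volume_add_le`. -/
theorem lintegral_add_le_of_sup_one {f g k : ℝ → ℝ} (hf : Measurable f) (hg : Measurable g)
    (hk : Measurable k) (hf0 : ∀ x, 0 ≤ f x) (hg0 : ∀ x, 0 ≤ g x) (hk0 : ∀ x, 0 ≤ k x)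
    (hf1 : ∀ x, f x ≤ 1) (hg1 : ∀ x, g x ≤ 1)
    (hfs : ∀ t < 1, ∃ x, t < f x) (hgs : ∀ t < 1, ∃ x, t < g x)
    (h : ∀ x y, f x * g y ≤ k ((1 / 2) * (x + y)) ^ 2) :
    (∫⁻ x, ENNReal.ofReal (f x)) + (∫⁻ x, ENNReal.ofReal (g x))
      ≤ 2 * ∫⁻ x, ENNReal.ofReal (k x) := by
  rw [lintegral_eq_lintegral_meas_lt _ (.of_forall hf0) hf.aemeasurable,
    lintegral_eq_lintegral_meas_lt _ (.of_forall hg0) hg.aemeasurable,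
    lintegral_eq_lintegral_meas_lt _ (.of_forall hk0) hk.aemeasurable,
    ← lintegral_const_mul' _ _ (by simp)]
  refine (le_lintegral_add _ _).trans (setLIntegral_mono' measurableSet_Ioi fun t ht => ?_)
  have ht0 : 0 < t := ht
  by_cases ht1 : t < 1
  · have hv : volume ((fun x => (1 / 2 : ℝ) * x) ⁻¹' {a | t < k a})
        = 2 * volume {a | t < k a} := by
      rw [Real.volume_preimage_mul_left (by norm_num)]
      norm_num
    rw [← hv]
    refine volume_add_le (measurableSet_lt measurable_const hf)
      (measurableSet_lt measurable_const hg) (hfs t ht1) (hgs t ht1) ?_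
    intro a ha b hb
    simp only [Set.mem_ofPred_eq, Set.mem_preimage] at ha hb ⊢
    have : t ^ 2 < k (1 / 2 * (a + b)) ^ 2 := by
      refine lt_of_lt_of_le ?_ (h a b)
      nlinarith
    exact lt_of_pow_lt_pow_left₀ 2 (hk0 _) this
  · have e1 : {a | t < f a} = ∅ := by
      ext a; simpa using (hf1 a).trans (not_lt.mp ht1)
    have e2 : {a | t < g a} = ∅ := by
      ext a; simpa using (hg1 a).trans (not_lt.mp ht1)
    simp [e1, e2]

theorem ENNReal_mul_le_sq {a b c : ℝ≥0∞} (h : a + b ≤ 2 * c) : a * b ≤ c ^ 2 := by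
  by_cases hc : c = ⊤
  · simp [hc]
  have h2 : a + b ≠ ⊤ := ne_top_of_le_ne_top (ENNReal.mul_ne_top (by simp) hc) h
  obtain ⟨ha, hb⟩ := ENNReal.add_ne_top.mp h2
  lift a to ℝ≥0 using ha
  lift b to ℝ≥0 using hb
  lift c to ℝ≥0 using hc
  norm_cast at h ⊢
  have h' : (a : ℝ) + b ≤ 2 * c := by exact_mod_cast h
  have : (a : ℝ) * b ≤ c ^ 2 := by
    nlinarith [sq_nonneg ((a : ℝ) - b), a.2, b.2, c.2,
      mul_self_le_mul_self (add_nonneg a.2 b.2) h']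
  exact_mod_cast this

/-- The bounded real-valued case, by rescaling both functions to have supremum `1`. -/
theorem lintegral_mul_le_of_bounded {f g k : ℝ → ℝ} (hf : Measurable f) (hg : Measurable g)
    (hk : Measurable k) (hf0 : ∀ x, 0 ≤ f x) (hg0 : ∀ x, 0 ≤ g x) (hk0 : ∀ x, 0 ≤ k x)
    (hfb : BddAbove (Set.range f)) (hgb : BddAbove (Set.range g))
    (h : ∀ x y, f x * g y ≤ k ((1 / 2) * (x + y)) ^ 2) :
    (∫⁻ x, ENNReal.ofReal (f x)) * (∫⁻ x, ENNReal.ofReal (g x))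
      ≤ (∫⁻ x, ENNReal.ofReal (k x)) ^ 2 := by
  set M := ⨆ x, f x with hM
  set N := ⨆ x, g x with hN
  have hfM : ∀ x, f x ≤ M := le_ciSup hfb
  have hgN : ∀ x, g x ≤ N := le_ciSup hgb
  rcases (le_trans (hf0 0) (hfM 0)).eq_or_lt with hM0 | hM0
  · have : ∀ x, f x = 0 := fun x => le_antisymm (hM0 ▸ hfM x) (hf0 x)
    simp [this]
  rcases (le_trans (hg0 0) (hgN 0)).eq_or_lt with hN0 | hN0
  · have : ∀ x, g x = 0 := fun x => le_antisymm (hN0 ▸ hgN x) (hg0 x)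
    simp [this]
  have hR : 0 < √(M * N) := Real.sqrt_pos.mpr (mul_pos hM0 hN0)
  have key := lintegral_add_le_of_sup_one (f := fun x => M⁻¹ * f x) (g := fun x => N⁻¹ * g x)
    (k := fun x => (√(M * N))⁻¹ * k x) (by fun_prop) (by fun_prop) (by fun_prop)
    (fun x => mul_nonneg (by positivity) (hf0 x)) (fun x => mul_nonneg (by positivity) (hg0 x))
    (fun x => mul_nonneg (by positivity) (hk0 x))
    (fun x => by rw [inv_mul_le_one₀ hM0]; exact hfM x)
    (fun x => by rw [inv_mul_le_one₀ hN0]; exact hgN x)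
    (fun t ht => by
      obtain ⟨x, hx⟩ := exists_lt_of_lt_ciSup (f := f) (b := M * t) (by nlinarith)
      exact ⟨x, by rwa [lt_inv_mul_iff₀ hM0]⟩)
    (fun t ht => by
      obtain ⟨x, hx⟩ := exists_lt_of_lt_ciSup (f := g) (b := N * t) (by nlinarith)
      exact ⟨x, by rwa [lt_inv_mul_iff₀ hN0]⟩)
    (fun x y => by
      rw [mul_pow, inv_pow, Real.sq_sqrt (by positivity), mul_inv]
      calc M⁻¹ * f x * (N⁻¹ * g y) = M⁻¹ * N⁻¹ * (f x * g y) := by ring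
        _ ≤ _ := by gcongr; exact h x y)
  have hmul : ∀ (r : ℝ) (_ : 0 < r) (u : ℝ → ℝ),
      ∫⁻ x, ENNReal.ofReal (r⁻¹ * u x) = ENNReal.ofReal r⁻¹ * ∫⁻ x, ENNReal.ofReal (u x) := by
    intro r hr u
    rw [← lintegral_const_mul' _ _ (by simp)]
    refine lintegral_congr fun x => ENNReal.ofReal_mul (by positivity)
  rw [hmul _ hM0, hmul _ hN0, hmul _ hR] at key
  have key2 := ENNReal_mul_le_sq key
  have hRR : ENNReal.ofReal (√(M * N))⁻¹ ^ 2 = ENNReal.ofReal M⁻¹ * ENNReal.ofReal N⁻¹ := by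
    rw [← ENNReal.ofReal_pow (by positivity), ← ENNReal.ofReal_mul (by positivity), inv_pow,
      Real.sq_sqrt (by positivity), mul_inv]
  rw [mul_mul_mul_comm, mul_pow, hRR] at key2
  refine (ENNReal.mul_le_mul_iff_right ?_ ?_).mp key2
  · rw [← ENNReal.ofReal_mul (by positivity)]
    simp only [ne_eq, ENNReal.ofReal_eq_zero, not_le]
    positivity
  · exact ENNReal.mul_ne_top (by simp) (by simp)

/-! ### The Prékopa–Leindler inequality in `ℝⁿ` -/

/-- The measure space `E` satisfies the Prékopa–Leindler inequality at midpoints: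
`f x * g y ≤ k ((x + y) / 2) ^ 2` for all `x y` implies `∫ f * ∫ g ≤ (∫ k) ^ 2`. Values in
`ℝ≥0∞` are used so that marginals of measurable functions are again admissible. -/
def MidpointPL (E : Type*) [AddCommGroup E] [Module ℝ E] [MeasureSpace E] : Prop :=
  ∀ f g k : E → ℝ≥0∞, Measurable f → Measurable g → Measurable k →
    (∀ x y, f x * g y ≤ k ((1 / 2 : ℝ) • (x + y)) ^ 2) →
    (∫⁻ x, f x) * (∫⁻ x, g x) ≤ (∫⁻ x, k x) ^ 2

theorem lintegral_eq_iSup_min {f : ℝ → ℝ≥0∞} (hf : Measurable f) :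
    ∫⁻ x, f x = ⨆ n : ℕ, ∫⁻ x, min (f x) n := by
  rw [← lintegral_iSup (fun n => by fun_prop)]
  · refine lintegral_congr fun x => ?_
    rw [← inf_iSup_eq, ENNReal.iSup_natCast]
    simp
  · intro m n hmn x
    dsimp only
    gcongr

/-- The line satisfies the inequality: truncate, then use the bounded case. -/
theorem midpointPL_real : MidpointPL ℝ := by
  intro f g k hf hg hk h
  rw [lintegral_eq_iSup_min hf, lintegral_eq_iSup_min hg, ENNReal.iSup_mul]
  refine iSup_le fun n => ?_
  rw [ENNReal.mul_iSup]
  refine iSup_le fun m => ?_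
  have hne : ∀ (a : ℝ≥0∞) (j : ℕ), min a (j : ℝ≥0∞) ≠ ⊤ := fun a j =>
    ne_top_of_le_ne_top (ENNReal.natCast_ne_top j) (min_le_right _ _)
  have hb : ∀ (u : ℝ → ℝ≥0∞) (j : ℕ),
      BddAbove (Set.range fun x => (min (u x) (j : ℝ≥0∞)).toReal) := by
    rintro u j
    refine ⟨j, ?_⟩
    rintro _ ⟨x, rfl⟩
    simpa using ENNReal.toReal_mono (ENNReal.natCast_ne_top j) (min_le_right (u x) _)
  have key := lintegral_mul_le_of_bounded
    (f := fun x => (min (f x) (n : ℝ≥0∞)).toReal) (g := fun x => (min (g x) (m : ℝ≥0∞)).toReal)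
    (k := fun x => (min (k x) ((max n m : ℕ) : ℝ≥0∞)).toReal)
    (by fun_prop) (by fun_prop) (by fun_prop) (fun _ => ENNReal.toReal_nonneg)
    (fun _ => ENNReal.toReal_nonneg) (fun _ => ENNReal.toReal_nonneg) (hb f n) (hb g m) ?_
  · simp only [ENNReal.ofReal_toReal (hne _ _)] at key
    refine key.trans ?_
    gcongr
    exact min_le_left _ _
  · intro x y
    rw [← ENNReal.toReal_mul, ← ENNReal.toReal_pow]
    refine ENNReal.toReal_mono (ENNReal.pow_ne_top (hne _ _)) ?_
    rcases min_choice (k (1 / 2 * (x + y))) ((max n m : ℕ) : ℝ≥0∞) with e | e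
    · rw [e]
      refine le_trans ?_ (h x y)
      gcongr <;> exact min_le_left _ _
    · rw [e, sq]
      gcongr
      · exact (min_le_right _ _).trans (by exact_mod_cast le_max_left _ _)
      · exact (min_le_right _ _).trans (by exact_mod_cast le_max_right _ _)

/-- Tensorization: apply the inequality on `F` to the slices and on `E` to the marginals. -/
theorem MidpointPL.prod {E F : Type*} [AddCommGroup E] [Module ℝ E] [MeasureSpace E]
    [AddCommGroup F] [Module ℝ F] [MeasureSpace F] [SFinite (volume : Measure F)]
    (hE : MidpointPL E) (hF : MidpointPL F) : MidpointPL (E × F) := by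
  intro f g k hf hg hk h
  rw [Measure.volume_eq_prod, lintegral_prod _ hf.aemeasurable, lintegral_prod _ hg.aemeasurable,
    lintegral_prod _ hk.aemeasurable]
  refine hE _ _ _ hf.lintegral_prod_right' hg.lintegral_prod_right' hk.lintegral_prod_right' ?_
  intro x y
  refine hF _ _ _ (by fun_prop) (by fun_prop) (by fun_prop) fun s t => ?_
  exact h (x, s) (y, t)

theorem MidpointPL.of_equiv {E F : Type*} [AddCommGroup E] [Module ℝ E] [MeasureSpace E]
    [AddCommGroup F] [Module ℝ F] [MeasureSpace F] (hE : MidpointPL E) (e : E ≃ᵐ F)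
    (he : MeasurePreserving e)
    (hlin : ∀ x y, e ((1 / 2 : ℝ) • (x + y)) = (1 / 2 : ℝ) • (e x + e y)) :
    MidpointPL F := by
  intro f g k hf hg hk h
  rw [← he.lintegral_comp hf, ← he.lintegral_comp hg, ← he.lintegral_comp hk]
  refine hE _ _ _ (hf.comp e.measurable) (hg.comp e.measurable) (hk.comp e.measurable) ?_
  intro x y
  rw [hlin]
  exact h _ _

theorem midpointPL_fin (n : ℕ) : MidpointPL (Fin n → ℝ) := by
  induction n with
  | zero =>
    intro f g k _ _ _ h
    have hv : (volume : Measure (Fin 0 → ℝ)) = Measure.dirac default := by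
      rw [volume_pi, Measure.pi_of_empty _ default]
    rw [hv]
    simp only [lintegral_dirac]
    convert h default default
  | succ n ih =>
    have hp := volume_preserving_piFinSuccAbove (fun _ : Fin (n + 1) => ℝ) 0
    refine (midpointPL_real.prod ih).of_equiv
      (MeasurableEquiv.piFinSuccAbove (fun _ : Fin (n + 1) => ℝ) 0).symm (hp.symm _) ?_
    intro x y
    rw [MeasurableEquiv.symm_apply_eq]
    ext i <;> simp [MeasurableEquiv.piFinSuccAbove, Fin.insertNthEquiv, Fin.tail]

theorem midpointPL_pi (ι : Type*) [Fintype ι] : MidpointPL (ι → ℝ) := by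
  refine (midpointPL_fin (Fintype.card ι)).of_equiv
    (MeasurableEquiv.piCongrLeft (fun _ => ℝ) (Fintype.equivFin ι).symm)
    (volume_measurePreserving_piCongrLeft _ _) ?_
  intro x y
  ext i
  obtain ⟨j, rfl⟩ := (Fintype.equivFin ι).symm.surjective i
  simp [MeasurableEquiv.piCongrLeft, Equiv.piCongrLeft_apply, mul_add]

/-! ### The Dirichlet form and strong convexity of the Hamiltonian -/

section Dirichlet

variable {α : Type*} [DecidableEq α]

theorem gvee_add_zero (B : Finset α) (u v : {x // x ∉ B} → ℝ) (z : α) :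
    gvee B (u + v) (fun _ => 0) z = gvee B u (fun _ => 0) z + gvee B v (fun _ => 0) z := by
  unfold gvee
  split_ifs <;> simp

theorem gvee_smul_zero (B : Finset α) (c : ℝ) (u : {x // x ∉ B} → ℝ) (z : α) :
    gvee B (c • u) (fun _ => 0) z = c * gvee B u (fun _ => 0) z := by
  unfold gvee
  split_ifs <;> simp

theorem gvee_midpoint (B : Finset α) (ψ : α → ℝ) (u v : {x // x ∉ B} → ℝ) (z : α) :
    gvee B ((1 / 2 : ℝ) • (u + v)) ψ z = (gvee B u ψ z + gvee B v ψ z) / 2 := by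
  unfold gvee
  split_ifs
  · ring
  · simp only [Pi.smul_apply, Pi.add_apply, smul_eq_mul]
    ring

theorem gvee_sub (B : Finset α) (ψ : α → ℝ) (u v : {x // x ∉ B} → ℝ) (z : α) :
    gvee B (u - v) (fun _ => 0) z = gvee B u ψ z - gvee B v ψ z := by
  unfold gvee
  split_ifs <;> simp

variable [Fintype α]

/-- The Dirichlet form `∑_{b ∈ E} ∇u(b) ∇v(b)` with zero boundary values, each undirected edge
counted once. -/
def dirichlet (G : SimpleGraph α) [DecidableRel G.Adj] (B : Finset α) :
    LinearMap.BilinForm ℝ ({x // x ∉ B} → ℝ) :=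
  LinearMap.mk₂ ℝ
    (fun u v => (1 / 2) * ∑ x : α, ∑ y : α, if G.Adj x y then
      (gvee B u (fun _ => 0) y - gvee B u (fun _ => 0) x) *
        (gvee B v (fun _ => 0) y - gvee B v (fun _ => 0) x) else 0)
    (fun u u' v => by
      simp only [gvee_add_zero, ← mul_add, ← Finset.sum_add_distrib]
      congr 1
      refine Finset.sum_congr rfl fun x _ => Finset.sum_congr rfl fun y _ => ?_
      split_ifs <;> ring)
    (fun c u v => by
      simp only [gvee_smul_zero, smul_eq_mul, mul_left_comm c, Finset.mul_sum]
      refine Finset.sum_congr rfl fun x _ => Finset.sum_congr rfl fun y _ => ?_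
      split_ifs <;> ring)
    (fun u v v' => by
      simp only [gvee_add_zero, ← mul_add, ← Finset.sum_add_distrib]
      congr 1
      refine Finset.sum_congr rfl fun x _ => Finset.sum_congr rfl fun y _ => ?_
      split_ifs <;> ring)
    (fun c u v => by
      simp only [gvee_smul_zero, smul_eq_mul, mul_left_comm c, Finset.mul_sum]
      refine Finset.sum_congr rfl fun x _ => Finset.sum_congr rfl fun y _ => ?_
      split_ifs <;> ring)

variable (G : SimpleGraph α) [DecidableRel G.Adj] (B : Finset α)

theorem dirichlet_apply (u v : {x // x ∉ B} → ℝ) :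
    dirichlet G B u v = (1 / 2) * ∑ x : α, ∑ y : α, if G.Adj x y then
      (gvee B u (fun _ => 0) y - gvee B u (fun _ => 0) x) *
        (gvee B v (fun _ => 0) y - gvee B v (fun _ => 0) x) else 0 := rfl

theorem dirichlet_comm (u v : {x // x ∉ B} → ℝ) : dirichlet G B u v = dirichlet G B v u := by
  simp only [dirichlet_apply, mul_comm]

theorem dirichlet_self_nonneg (u : {x // x ∉ B} → ℝ) : 0 ≤ dirichlet G B u u := by
  rw [dirichlet_apply]
  refine mul_nonneg (by norm_num) (Finset.sum_nonneg fun x _ => Finset.sum_nonneg fun y _ => ?_)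
  split_ifs
  · exact mul_self_nonneg _
  · exact le_rfl

theorem graphDGFFEnergy_eq (h : {x // x ∉ B} → ℝ) :
    graphDGFFEnergy G B (fun _ _ => 1) (fun _ => 0) h = (1 / 2) * dirichlet G B h h := by
  rw [dirichlet_apply, graphDGFFEnergy, ← mul_assoc]
  congr 1
  · norm_num
  · refine Finset.sum_congr rfl fun x _ => Finset.sum_congr rfl fun y _ => ?_
    split_ifs <;> ring

variable {G B}

/-- A field of zero Dirichlet energy has zero gradient, hence is constant by connectedness, and
the constant is the boundary value `0`. -/
theorem eq_zero_of_dirichlet_self (hG : G.Connected) (hB : B.Nonempty) {u : {x // x ∉ B} → ℝ}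
    (hu : dirichlet G B u u = 0) : u = 0 := by
  have hnn : ∀ x y : α, 0 ≤ if G.Adj x y then
      (gvee B u (fun _ => 0) y - gvee B u (fun _ => 0) x) *
        (gvee B u (fun _ => 0) y - gvee B u (fun _ => 0) x) else 0 := by
    intro x y
    split_ifs
    · exact mul_self_nonneg _
    · exact le_rfl
  rw [dirichlet_apply, mul_eq_zero, or_iff_right (by norm_num),
    Finset.sum_eq_zero_iff_of_nonneg (fun x _ => Finset.sum_nonneg fun y _ => hnn x y)] at hu
  have hadj : ∀ x y, G.Adj x y → gvee B u (fun _ => 0) x = gvee B u (fun _ => 0) y := by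
    intro x y hxy
    have h1 := (Finset.sum_eq_zero_iff_of_nonneg (fun y _ => hnn x y)).mp
      (hu x (Finset.mem_univ x)) y (Finset.mem_univ y)
    rw [if_pos hxy, mul_self_eq_zero] at h1
    linarith
  have hreach : ∀ x y, G.Reachable x y →
      gvee B u (fun _ => 0) x = gvee B u (fun _ => 0) y := by
    rintro x y ⟨p⟩
    induction p with
    | nil => rfl
    | cons hxy _ ih => exact (hadj _ _ hxy).trans ih
  obtain ⟨b, hb⟩ := hB
  ext ⟨x, hx⟩
  have := hreach x b (hG.preconnected x b)
  simpa [gvee, hx, hb] using this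

/-- Riesz representation of `ν` by the Dirichlet form, i.e. solvability of the discrete Poisson
equation. -/
theorem exists_dirichlet_eq (hG : G.Connected) (hB : B.Nonempty) (ν : {x // x ∉ B} → ℝ) :
    ∃ u, ∀ d, ∑ x, ν x * d x = dirichlet G B u d := by
  have hinj : Function.Injective (dirichlet G B) := by
    rw [injective_iff_map_eq_zero]
    intro u hu
    exact eq_zero_of_dirichlet_self hG hB (by rw [hu]; rfl)
  have hsurj := (LinearMap.injective_iff_surjective_of_finrank_eq_finrank
    (f := dirichlet G B) (Subspace.dual_finrank_eq).symm).mp hinj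
  obtain ⟨u, hu⟩ := hsurj (∑ x, ν x • LinearMap.proj x)
  refine ⟨u, fun d => ?_⟩
  rw [hu]
  simp

end Dirichlet

/-- Uniform convexity of `V` with constant `a`, in midpoint form. -/
theorem midpoint_strongConvex {V : ℝ → ℝ} {a : ℝ} (hV : ContDiff ℝ 2 V)
    (ha : ∀ x, a ≤ deriv (deriv V) x) (p q : ℝ) :
    V ((p + q) / 2) + a / 8 * (p - q) ^ 2 ≤ (V p + V q) / 2 := by
  have hd : Differentiable ℝ V := hV.differentiable (by norm_num)
  have hd1 : Differentiable ℝ (deriv V) := by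
    have : ContDiff ℝ 1 (deriv V) := (contDiff_succ_iff_deriv (n := 1).mp hV).2.2
    exact this.differentiable (by norm_num)
  have hder : deriv (fun x => V x - a / 2 * x ^ 2) = fun x => deriv V x - a * x := by
    ext x
    have := ((hd x).hasDerivAt.sub (((hasDerivAt_id x).pow 2).const_mul (a / 2))).deriv
    simp only [id] at this
    refine Eq.trans ?_ (this.trans ?_)
    · rfl
    · simp; ring
  have hder2 : ∀ x, deriv (fun x => deriv V x - a * x) x = deriv (deriv V) x - a := by
    intro x
    have := ((hd1 x).hasDerivAt.sub ((hasDerivAt_id x).const_mul a)).deriv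
    refine Eq.trans ?_ (this.trans ?_)
    · rfl
    · simp
  have hconv : ConvexOn ℝ Set.univ (fun x => V x - a / 2 * x ^ 2) := by
    refine convexOn_univ_of_deriv2_nonneg (by fun_prop) (by rw [hder]; fun_prop) fun x => ?_
    simp only [Function.iterate_succ, Function.iterate_zero, Function.comp_apply, id]
    rw [hder, hder2]
    linarith [ha x]
  have := hconv.2 (Set.mem_univ p) (Set.mem_univ q) (by norm_num : (0 : ℝ) ≤ 1 / 2)
    (by norm_num : (0 : ℝ) ≤ 1 / 2) (by norm_num)
  simp only [smul_eq_mul] at this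
  rw [show 1 / 2 * p + 1 / 2 * q = (p + q) / 2 by ring] at this
  nlinarith

theorem graphGLEnergy_midpoint {α : Type*} [Fintype α] [DecidableEq α] {V : ℝ → ℝ} {a : ℝ}
    (hV : ContDiff ℝ 2 V) (ha : ∀ x, a ≤ deriv (deriv V) x) (G : SimpleGraph α)
    [DecidableRel G.Adj] (B : Finset α) (ψ : α → ℝ) (u v : {x // x ∉ B} → ℝ) :
    graphGLEnergy V G B ψ ((1 / 2 : ℝ) • (u + v)) + a / 8 * dirichlet G B (u - v) (u - v)
      ≤ (graphGLEnergy V G B ψ u + graphGLEnergy V G B ψ v) / 2 := by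
  have key : ∀ x y : α,
      (if G.Adj x y then V (gvee B ((1 / 2 : ℝ) • (u + v)) ψ y
          - gvee B ((1 / 2 : ℝ) • (u + v)) ψ x) else 0)
        + a / 8 * (if G.Adj x y then
          (gvee B (u - v) (fun _ => 0) y - gvee B (u - v) (fun _ => 0) x) *
            (gvee B (u - v) (fun _ => 0) y - gvee B (u - v) (fun _ => 0) x) else 0)
      ≤ ((if G.Adj x y then V (gvee B u ψ y - gvee B u ψ x) else 0)
          + (if G.Adj x y then V (gvee B v ψ y - gvee B v ψ x) else 0)) / 2 := by
    intro x y
    split_ifs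
    · have h := midpoint_strongConvex hV ha (gvee B u ψ y - gvee B u ψ x)
        (gvee B v ψ y - gvee B v ψ x)
      rw [gvee_midpoint, gvee_midpoint, gvee_sub B ψ, gvee_sub B ψ]
      convert h using 2
      · congr 1; ring
      · ring
    · simp
  have hs := Finset.sum_le_sum fun x (_ : x ∈ Finset.univ) =>
    Finset.sum_le_sum fun y (_ : y ∈ Finset.univ) => key x y
  simp only [Finset.sum_add_distrib, ← Finset.mul_sum, ← Finset.sum_div] at hs
  simp only [graphGLEnergy, dirichlet_apply]
  linarith

theorem measurable_gvee {α : Type*} [DecidableEq α] (B : Finset α) (ψ : α → ℝ)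
    (z : α) : Measurable fun h : {x // x ∉ B} → ℝ => gvee B h ψ z := by
  unfold gvee
  split_ifs <;> fun_prop

theorem measurable_graphGLEnergy {α : Type*} [Fintype α] [DecidableEq α] {V : ℝ → ℝ}
    (hV : Measurable V) (G : SimpleGraph α) [DecidableRel G.Adj] (B : Finset α) (ψ : α → ℝ) :
    Measurable (graphGLEnergy V G B ψ) := by
  unfold graphGLEnergy
  refine (Finset.measurable_sum _ fun x _ => Finset.measurable_sum _ fun y _ => ?_).const_mul _
  split_ifs
  · exact hV.comp ((measurable_gvee B ψ y).sub (measurable_gvee B ψ x))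
  · fun_prop

theorem measurable_graphDGFFEnergy {α : Type*} [Fintype α] [DecidableEq α]
    (G : SimpleGraph α) [DecidableRel G.Adj] (B : Finset α) (w : α → α → ℝ) (φ : α → ℝ) :
    Measurable (graphDGFFEnergy G B w φ) := by
  unfold graphDGFFEnergy
  refine (Finset.measurable_sum _ fun x _ => Finset.measurable_sum _ fun y _ => ?_).const_mul _
  split_ifs
  · exact (((measurable_gvee B φ y).sub (measurable_gvee B φ x)).pow_const 2).const_mul _
  · fun_prop

/-! ### Exponential moments -/

/-- Exponential moments of the free field: if `u` represents `ν`, translating by `C • u` completes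
the square in `C * ⟨ν, h⟩ - D(h, h) / 2`. -/
theorem integral_exp_dgff {α : Type*} [Fintype α] [DecidableEq α] {G : SimpleGraph α}
    [DecidableRel G.Adj] {B : Finset α} {Q : Measure ({x // x ∉ B} → ℝ)}
    (hQ : IsGraphDGFF G B (fun _ _ => 1) (fun _ => 0) Q) {ν u : {x // x ∉ B} → ℝ}
    (hu : ∀ d, ∑ x, ν x * d x = dirichlet G B u d) (C : ℝ) :
    ∫ h, Real.exp (C * ∑ x, ν x * h x) ∂Q = Real.exp (C ^ 2 / 2 * dirichlet G B u u) := by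
  obtain ⟨hprob, c, -, -, hQc⟩ := hQ
  have hform : ∀ F : ({x // x ∉ B} → ℝ) → ℝ,
      ∫ h, F h ∂Q = c.toReal * ∫ h, Real.exp (-((1 / 2) * dirichlet G B h h)) * F h := by
    intro F
    rw [hQc, integral_smul_measure, integral_withDensity_eq_integral_toReal_smul
      (measurable_graphDGFFEnergy G B _ _).fun_neg.exp.ennreal_ofReal (by simp)]
    simp only [graphDGFFEnergy_eq, smul_eq_mul, ENNReal.toReal_ofReal (Real.exp_pos _).le]
  have h1 : ∫ _, (1 : ℝ) ∂Q = 1 := by simp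
  rw [hform] at h1 ⊢
  rw [← integral_add_right_eq_self _ (C • u)]
  have hpt : ∀ h : {x // x ∉ B} → ℝ,
      Real.exp (-((1 / 2) * dirichlet G B (h + C • u) (h + C • u))) *
        Real.exp (C * ∑ x, ν x * (h + C • u) x)
      = Real.exp (C ^ 2 / 2 * dirichlet G B u u) *
        (Real.exp (-((1 / 2) * dirichlet G B h h)) * 1) := by
    intro h
    rw [hu, mul_one, ← Real.exp_add, ← Real.exp_add]
    congr 1
    simp only [map_add, map_smul, LinearMap.add_apply, LinearMap.smul_apply, smul_eq_mul,
      dirichlet_comm G B h u]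
    ring
  simp only [hpt]
  rw [integral_const_mul, mul_left_comm, h1, mul_one]

/-- The Prékopa–Leindler inequality applied to `exp (± ⟨ν, h⟩ - H h)`: uniform convexity of `H`
absorbs the linear term `⟨ν, x - y⟩ / 2 = D(u, x - y) / 2` at the cost of `D(u, u) / (2a)`. -/
theorem lintegral_exp_mul_lintegral_exp_neg_le {α : Type*} [Fintype α] [DecidableEq α]
    {G : SimpleGraph α} [DecidableRel G.Adj] {B : Finset α} {V : ℝ → ℝ} {a : ℝ} (ha0 : 0 < a)
    (hV : ContDiff ℝ 2 V) (ha : ∀ x, a ≤ deriv (deriv V) x) {ψ : α → ℝ}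
    {P : Measure ({x // x ∉ B} → ℝ)} (hP : IsGraphGL V G B ψ P) {ν u : {x // x ∉ B} → ℝ}
    (hu : ∀ d, ∑ x, ν x * d x = dirichlet G B u d) :
    (∫⁻ h, ENNReal.ofReal (Real.exp (∑ x, ν x * h x)) ∂P) *
        (∫⁻ h, ENNReal.ofReal (Real.exp (-∑ x, ν x * h x)) ∂P)
      ≤ ENNReal.ofReal (Real.exp (dirichlet G B u u / a)) := by
  obtain ⟨hprob, c, -, -, hPc⟩ := hP
  have hH : Measurable (graphGLEnergy V G B ψ) :=
    measurable_graphGLEnergy hV.continuous.measurable G B ψ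
  have hl : Measurable fun h : {x // x ∉ B} → ℝ => ∑ x, ν x * h x := by fun_prop
  set H := graphGLEnergy V G B ψ
  have hform : ∀ F : ({x // x ∉ B} → ℝ) → ℝ, Measurable F →
      ∫⁻ h, ENNReal.ofReal (Real.exp (F h)) ∂P
        = c * ∫⁻ h, ENNReal.ofReal (Real.exp (F h - H h)) := by
    intro F hF
    rw [hPc, lintegral_smul_measure, lintegral_withDensity_eq_lintegral_mul _
      hH.fun_neg.exp.ennreal_ofReal hF.exp.ennreal_ofReal, smul_eq_mul]
    congr 1
    refine lintegral_congr fun h => ?_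
    rw [Pi.mul_apply, ← ENNReal.ofReal_mul (Real.exp_pos _).le, ← Real.exp_add]
    congr 2
    ring
  have hconst : ∫⁻ _, ENNReal.ofReal (Real.exp (dirichlet G B u u / (2 * a))) ∂P
      = ENNReal.ofReal (Real.exp (dirichlet G B u u / (2 * a))) := by simp
  have hPL := midpointPL_pi {x // x ∉ B}
    (fun h => ENNReal.ofReal (Real.exp (∑ x, ν x * h x - H h)))
    (fun h => ENNReal.ofReal (Real.exp (-∑ x, ν x * h x - H h)))
    (fun h => ENNReal.ofReal (Real.exp (dirichlet G B u u / (2 * a) - H h)))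
    (hl.sub hH).exp.ennreal_ofReal (hl.neg.sub hH).exp.ennreal_ofReal
    (measurable_const.sub hH).exp.ennreal_ofReal ?_
  · calc _ = c ^ 2 * ((∫⁻ h, ENNReal.ofReal (Real.exp (∑ x, ν x * h x - H h))) *
          ∫⁻ h, ENNReal.ofReal (Real.exp (-∑ x, ν x * h x - H h))) := by
          rw [hform _ hl, hform _ hl.fun_neg]; ring
      _ ≤ c ^ 2 * (∫⁻ h, ENNReal.ofReal (Real.exp (dirichlet G B u u / (2 * a) - H h))) ^ 2 := by
          gcongr
      _ = _ := by
          rw [← mul_pow, ← hform _ measurable_const, hconst,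
            ← ENNReal.ofReal_pow (Real.exp_pos _).le, ← Real.exp_nat_mul]
          congr 2
          push_cast
          field_simp
  · intro x y
    rw [← ENNReal.ofReal_mul (Real.exp_pos _).le, ← ENNReal.ofReal_pow (Real.exp_pos _).le,
      ← Real.exp_add, ← Real.exp_nat_mul]
    refine ENNReal.ofReal_le_ofReal (Real.exp_le_exp.mpr ?_)
    have hmid := graphGLEnergy_midpoint hV ha G B ψ x y
    have hsq := dirichlet_self_nonneg G B (u - (a / 2) • (x - y))
    simp only [hu]
    have hlin : dirichlet G B u x - dirichlet G B u y = dirichlet G B u (x - y) := by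
      rw [map_sub]
    set d := x - y
    simp only [map_sub, map_smul, LinearMap.sub_apply, LinearMap.smul_apply, smul_eq_mul,
      dirichlet_comm G B d u] at hsq
    have hsq' : dirichlet G B u d ≤ dirichlet G B u u / a + a / 4 * dirichlet G B d d := by
      have : dirichlet G B u u / a + a / 4 * dirichlet G B d d
          = (dirichlet G B u u + a ^ 2 / 4 * dirichlet G B d d) / a := by
        field_simp
      rw [this, le_div_iff₀ ha0]
      linarith
    have he : dirichlet G B u u / (2 * a) = dirichlet G B u u / a / 2 := by
      field_simp
    rw [he]
    push_cast
    linarith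

/-- Symmetrization: since `1 ≤ E exp(E X - X)`, the centred exponential moment is bounded by
`E exp X * E exp (-X)`. -/
theorem integral_exp_sub_mean_le {Ω : Type*} [MeasurableSpace Ω] {P : Measure Ω}
    [IsProbabilityMeasure P] {X : Ω → ℝ} (hX : Measurable X) {K : ℝ} (hK : 0 ≤ K)
    (h : (∫⁻ ω, ENNReal.ofReal (Real.exp (X ω)) ∂P) *
      (∫⁻ ω, ENNReal.ofReal (Real.exp (-X ω)) ∂P) ≤ ENNReal.ofReal K) :
    ∫ ω, Real.exp (X ω - ∫ ω', X ω' ∂P) ∂P ≤ K := by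
  have hpos : ∀ Y : Ω → ℝ, Measurable Y → ∫⁻ ω, ENNReal.ofReal (Real.exp (Y ω)) ∂P ≠ 0 := by
    intro Y hY h0
    rw [lintegral_eq_zero_iff hY.exp.ennreal_ofReal] at h0
    obtain ⟨ω, hω⟩ := h0.exists
    simp only [Pi.zero_apply, ENNReal.ofReal_eq_zero] at hω
    exact absurd (Real.exp_pos (Y ω)) (not_lt.mpr hω)
  have hprod := ne_top_of_le_ne_top ENNReal.ofReal_ne_top h
  have hExpInt : ∀ Y : Ω → ℝ, Measurable Y →
      ∫⁻ ω, ENNReal.ofReal (Real.exp (Y ω)) ∂P ≠ ⊤ → Integrable (fun ω => Real.exp (Y ω)) P := by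
    intro Y hY hfin
    exact (lintegral_ofReal_ne_top_iff_integrable hY.exp.aestronglyMeasurable
      (.of_forall fun ω => (Real.exp_pos _).le)).mp hfin
  -- Both factors are nonzero and their product is finite, so each is finite.
  have hI1 : Integrable (fun ω => Real.exp (X ω)) P := by
    refine hExpInt X hX fun htop => hprod ?_
    rw [htop, ENNReal.top_mul (hpos _ hX.fun_neg)]
  have hI2 : Integrable (fun ω => Real.exp (-X ω)) P := by
    refine hExpInt _ hX.fun_neg fun htop => hprod ?_
    rw [htop, ENNReal.mul_top (hpos _ hX)]
  have hIX : Integrable X P := by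
    refine (hI1.add hI2).mono' hX.aestronglyMeasurable (.of_forall fun ω => ?_)
    rw [Real.norm_eq_abs, Pi.add_apply, abs_le]
    constructor <;>
      linarith [Real.add_one_le_exp (X ω), Real.add_one_le_exp (-X ω), Real.exp_pos (X ω),
        Real.exp_pos (-X ω)]
  set m := ∫ ω, X ω ∂P with hm
  have hJ : Real.exp (-m) ≤ ∫ ω, Real.exp (-X ω) ∂P := by
    have h1 : ∫ ω, (m - X ω + 1) ∂P ≤ ∫ ω, Real.exp m * Real.exp (-X ω) ∂P := by
      refine integral_mono (by fun_prop) (hI2.const_mul _) fun ω => ?_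
      dsimp only
      rw [← Real.exp_add, ← sub_eq_add_neg]
      exact Real.add_one_le_exp _
    rw [integral_add (by fun_prop) (by fun_prop), integral_sub (by fun_prop) hIX,
      integral_const_mul] at h1
    simp only [integral_const, probReal_univ, smul_eq_mul, one_mul, ← hm] at h1
    rw [Real.exp_neg, inv_le_iff_one_le_mul₀' (Real.exp_pos m)]
    linarith
  have hreal : (∫ ω, Real.exp (X ω) ∂P) * ∫ ω, Real.exp (-X ω) ∂P ≤ K := by
    rw [← ofReal_integral_eq_lintegral_ofReal hI1 (.of_forall fun ω => (Real.exp_pos _).le),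
      ← ofReal_integral_eq_lintegral_ofReal hI2 (.of_forall fun ω => (Real.exp_pos _).le),
      ← ENNReal.ofReal_mul (integral_nonneg fun ω => (Real.exp_pos _).le)] at h
    exact (ENNReal.ofReal_le_ofReal_iff hK).mp h
  calc ∫ ω, Real.exp (X ω - m) ∂P = (∫ ω, Real.exp (X ω) ∂P) * Real.exp (-m) := by
        rw [← integral_mul_const]
        refine integral_congr_ae (.of_forall fun ω => ?_)
        dsimp only
        rw [← Real.exp_add, sub_eq_add_neg]
    _ ≤ (∫ ω, Real.exp (X ω) ∂P) * ∫ ω, Real.exp (-X ω) ∂P := by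
        gcongr
    _ ≤ K := hreal

/-- Brascamp–Lieb exponential moment inequality.
There is `C > 0` depending only on `a_V, A_V` such that for every finite connected graph
`G = (V ∪ ∂V, E)` with `∂V ≠ ∅`, every boundary condition `ψ` and every `ν ∈ ℝ^V`,
`E_{P^ψ}[exp(⟨ν,h⟩ − E⟨ν,h⟩)] ≤ E[exp(C⟨ν,h*⟩)]`, where `h*` is the zero-boundary
unit-weight DGFF. -/
theorem brascamp_lieb_exponential (aV AV : ℝ) (haV : 0 < aV) :
    ∃ C : ℝ, 0 < C ∧
      ∀ (V : ℝ → ℝ), ContDiff ℝ 2 V → (∀ x, V (-x) = V x) →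
        (∀ x, aV ≤ deriv (deriv V) x) → (∀ x, deriv (deriv V) x ≤ AV) →
      ∀ (α : Type) [Fintype α] [DecidableEq α] (G : SimpleGraph α) [DecidableRel G.Adj],
        G.Connected →
      ∀ (B : Finset α), B.Nonempty →
      ∀ (ψ : α → ℝ) (ν : {x // x ∉ B} → ℝ) (P Pstar : Measure ({x // x ∉ B} → ℝ)),
        IsGraphGL V G B ψ P →
        IsGraphDGFF G B (fun _ _ => 1) (fun _ => 0) Pstar →
        (∫ h, Real.exp ((∑ x, ν x * h x) - ∫ h', ∑ x, ν x * h' x ∂P) ∂P)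
          ≤ ∫ h, Real.exp (C * ∑ x, ν x * h x) ∂Pstar := by
  refine ⟨√(2 / aV), Real.sqrt_pos.mpr (by positivity), ?_⟩
  intro V hV _ ha _ α _ _ G _ hG B hB ψ ν P Pstar hP hQ
  obtain ⟨u, hu⟩ := exists_dirichlet_eq hG hB ν
  rw [integral_exp_dgff hQ hu, Real.sq_sqrt (by positivity)]
  have := hP.1
  refine integral_exp_sub_mean_le (by fun_prop) (Real.exp_pos _).le ?_
  convert lintegral_exp_mul_lintegral_exp_neg_le haV hV ha hP hu using 3
  ring

end
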